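/- arXiv:1408.4747 — 2 statements merged into one kernel-verified Lean document; each statement's English description precedes it below -/
import Mathlib

section
/- Let (ξ_n)_{n≥1} be i.i.d. integrable real random variables with E[ξ_1] > 0, and let S_n = ∑_{k=1}^n ξ_k. Then q := ℙ(S_n ≥ 0 for all n ≥ 1) > 0. -/
/-!
By the strong law of large numbers `S_n → ∞` almost surely, so `n ↦ S_n` attains its minimum at some
finite time `m`, and the walk restarted at time `m` never goes below `0`. If the probability of
staying nonnegative were zero, then by stationarity almost surely none of the countably many
restarted walks would stay nonnegative.
-/

open MeasureTheory Filter Set ProbabilityTheory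
open scoped ENNReal

/-- Partial sum `S_n = ξ_1 + ⋯ + ξ_n` (with the increments indexed from `0`), `S_0 = 0`. -/
def psum (ξ : ℕ → ℝ) (n : ℕ) : ℝ := ∑ k ∈ Finset.range n, ξ k

theorem psum_add (x : ℕ → ℝ) (m n : ℕ) :
    psum x (m + n) = psum x m + psum (fun k => x (k + m)) n := by
  simp only [psum, Finset.sum_range_add, add_comm _ m]

@[fun_prop]
theorem measurable_psum (n : ℕ) : Measurable fun x => psum x n := by
  unfold psum
  fun_prop

theorem tendsto_psum_atTop_of_tendsto_div {x : ℕ → ℝ} {c : ℝ} (hc : 0 < c)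
    (hx : Tendsto (fun n : ℕ => psum x n / n) atTop (nhds c)) :
    Tendsto (psum x) atTop atTop := by
  refine (hx.pos_mul_atTop hc tendsto_natCast_atTop_atTop).congr' ?_
  filter_upwards [eventually_ne_atTop 0] with n hn
  exact div_mul_cancel₀ _ (Nat.cast_ne_zero.2 hn)

/-- The increment sequences whose walk of partial sums stays nonnegative forever, as an event in
the path space `ℕ → ℝ`. -/
def nonnegWalks : Set (ℕ → ℝ) := {x | ∀ n : ℕ, 1 ≤ n → 0 ≤ psum x n}

theorem measurableSet_nonnegWalks : MeasurableSet nonnegWalks := by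
  simp only [nonnegWalks, ofPred_forall]
  exact .iInter fun n => .iInter fun _ => measurableSet_le measurable_const (by fun_prop)

theorem shift_mem_nonnegWalks_of_forall_le {x : ℕ → ℝ} {m : ℕ} (hm : ∀ n, psum x m ≤ psum x n) :
    (fun k => x (k + m)) ∈ nonnegWalks := by
  intro n _
  have hle : psum x m ≤ psum x m + psum (fun k => x (k + m)) n := psum_add x m n ▸ hm (m + n)
  exact (le_add_iff_nonneg_right _).1 hle

theorem exists_shift_mem_nonnegWalks_of_tendsto {x : ℕ → ℝ} (hx : Tendsto (psum x) atTop atTop) :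
    ∃ m, (fun k => x (k + m)) ∈ nonnegWalks := by
  rw [← Nat.cofinite_eq_atTop] at hx
  obtain ⟨m, hm⟩ := hx.exists_forall_le
  exact ⟨m, shift_mem_nonnegWalks_of_forall_le hm⟩

section Stationary

variable {Ω E : Type*} [MeasurableSpace Ω] [MeasurableSpace E] {P : Measure Ω}

/-- Strict stationarity of a discrete-time process: its law on the path space `ℕ → E` is invariant
under time shifts. -/
def IsStationaryProcess (P : Measure Ω) (ξ : ℕ → Ω → E) : Prop :=
  ∀ m, IdentDistrib (fun ω k => ξ (k + m) ω) (fun ω k => ξ k ω) P P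

theorem isStationaryProcess_of_iIndepFun {ξ : ℕ → Ω → E} (hindep : iIndepFun ξ P)
    (hid : ∀ n, IdentDistrib (ξ n) (ξ 0) P P) : IsStationaryProcess P ξ := fun m =>
  IdentDistrib.pi (fun k => (hid (k + m)).trans (hid k).symm)
    (hindep.precomp (add_left_injective m)) hindep

theorem IsStationaryProcess.frequently_mem_of_exists_shift_mem {ξ : ℕ → Ω → E}
    (hξ : IsStationaryProcess P ξ) {B : Set (ℕ → E)} (hB : MeasurableSet B)
    (h : ∃ᵐ ω ∂P, ∃ m, (fun k => ξ (k + m) ω) ∈ B) : ∃ᵐ ω ∂P, (fun k => ξ k ω) ∈ B := by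
  contrapose! h
  have hshift : ∀ m, ∀ᵐ ω ∂P, (fun k => ξ (k + m) ω) ∈ Bᶜ := fun m =>
    (hξ m).symm.ae_mem_snd hB.compl h
  exact ae_all_iff.2 hshift

end Stationary

theorem ae_tendsto_psum_atTop {Ω : Type*} [MeasurableSpace Ω] {P : Measure Ω} {ξ : ℕ → Ω → ℝ}
    (hindep : Pairwise fun i j => IndepFun (ξ i) (ξ j) P)
    (hid : ∀ n, IdentDistrib (ξ n) (ξ 0) P P)
    (hint : Integrable (ξ 0) P) (hmean : 0 < ∫ ω, ξ 0 ω ∂P) :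
    ∀ᵐ ω ∂P, Tendsto (psum fun k => ξ k ω) atTop atTop := by
  filter_upwards [strong_law_ae_real ξ hint hindep hid] with ω hω
  exact tendsto_psum_atTop_of_tendsto_div hmean hω

theorem prob_walk_nonneg_pos_general {Ω : Type*} [MeasurableSpace Ω] {P : Measure Ω}
    {ξ : ℕ → Ω → ℝ} (hstat : IsStationaryProcess P ξ)
    (hdrift : ∃ᵐ ω ∂P, Tendsto (psum fun k => ξ k ω) atTop atTop) :
    0 < P {ω | ∀ n : ℕ, 1 ≤ n → 0 ≤ psum (fun k => ξ k ω) n} := by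
  have hshift : ∃ᵐ ω ∂P, ∃ m, (fun k => ξ (k + m) ω) ∈ nonnegWalks :=
    hdrift.mono fun _ => exists_shift_mem_nonnegWalks_of_tendsto
  exact pos_iff_ne_zero.2 <| frequently_ae_iff.1 <|
    hstat.frequently_mem_of_exists_shift_mem measurableSet_nonnegWalks hshift

/-- For i.i.d. integrable increments with positive mean, the probability that the random walk
of partial sums stays nonnegative forever is strictly positive. -/
theorem prob_walk_nonneg_pos {Ω : Type*} [MeasurableSpace Ω] (P : Measure Ω)
    [IsProbabilityMeasure P] (ξ : ℕ → Ω → ℝ) (hmeas : ∀ n, Measurable (ξ n))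
    (hindep : iIndepFun ξ P)
    (hid : ∀ n, IdentDistrib (ξ n) (ξ 0) P P)
    (hint : Integrable (ξ 0) P) (hmean : 0 < ∫ ω, ξ 0 ω ∂P) :
    0 < P {ω | ∀ n : ℕ, 1 ≤ n → 0 ≤ psum (fun k => ξ k ω) n} :=
  prob_walk_nonneg_pos_general (isStationaryProcess_of_iIndepFun hindep hid)
    (ae_tendsto_psum_atTop (fun _ _ hij => hindep.indepFun hij) hid hint hmean).frequently
end

section
/- Let (ξ_n)_{n≥1} be i.i.d. integrable real random variables with E[ξ_1] > 0, let μ > 0, h ∈ [0,∞), A ≥ 0, and w ∈ [−h,∞), and let (W_n)_{n≥0} be the DE-CuSum sequence started at w. Let τ_A = inf{n ≥ 1 : W_n > A} and let N = 1 + #{n ≥ 0 : n < τ_A, W_n ≥ 0 and W_{n+1} < 0} be the number of cycles (one plus the number of downcrossings of level 0 by the statistic before it first exceeds A). Then, with q = ℙ(S_n ≥ 0 for all n ≥ 1), one has ℙ(N ≥ k) ≤ (1 − q)^{k−1} for every k ≥ 1, and hence E[N] ≤ 1/q < ∞; in particular N < ∞ almost surely. The bound 1/q does not depend on w or on the threshold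 A. -/
open MeasureTheory Filter Set ProbabilityTheory
open scoped ENNReal

/-- DE-CuSum sequence with parameters `μ > 0` and `h ∈ [0,∞)`, started at `w`:
`W_{n+1} = min (W_n + μ) 0` if `W_n < 0`, and `W_{n+1} = max (W_n + ξ_{n+1}) (-h)` if `W_n ≥ 0`. -/
noncomputable def deCusum (ξ : ℕ → ℝ) (μ h w : ℝ) : ℕ → ℝ
  | 0 => w
  | n + 1 =>
    if deCusum ξ μ h w n < 0 then min (deCusum ξ μ h w n + μ) 0
    else max (deCusum ξ μ h w n + ξ n) (-h)
/-- First time `n ≥ 1` at which `P n` holds, valued in `ℕ∞` with `inf ∅ = ∞`. -/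
noncomputable def firstTime (P : ℕ → Prop) : ℕ∞ :=
  sInf ((↑) '' {n : ℕ | 1 ≤ n ∧ P n})

/-- Number of "cycles": one plus the number of downcrossings of level `0` by the DE-CuSum
statistic before it first exceeds the threshold `A`. -/
noncomputable def numCycles (ξ : ℕ → ℝ) (μ h w A : ℝ) : ℕ∞ :=
  1 + Set.encard {n : ℕ |
    (n : ℕ∞) < firstTime (fun m => A < deCusum ξ μ h w m) ∧
    0 ≤ deCusum ξ μ h w n ∧ deCusum ξ μ h w (n + 1) < 0}

/-!
A walk with positive drift tends to `+∞`, so it attains its minimum, after which it never goes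
below its current value; by shift invariance `q > 0`. When the statistic is nonnegative it dominates
the walk restarted at that time, so if the restarted walk never goes negative there are no further
downcrossings. By the strong Markov property at the start of the active phase that follows the
`j`-th downcrossing, a further downcrossing therefore has conditional probability at most `1 - q`.
The expectation bound is the sum of the resulting geometric tails.
-/

section StrongMarkov

variable {Ω E : Type*} [MeasurableSpace Ω] [MeasurableSpace E] {P : Measure Ω} {ξ : ℕ → Ω → E}

/-- The filtration of the sequence space by its past. At time `n` it knows the coordinates
`0, …, n - 1`, that is, `ξ_1, …, ξ_n` in the indexing of the paper. -/
def pastFiltration (E : Type*) [MeasurableSpace E] :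
    Filtration ℕ (MeasurableSpace.pi : MeasurableSpace (ℕ → E)) where
  seq n := Filtration.piFinset (Finset.range n)
  mono' _ _ hmn := Filtration.piFinset.mono (Finset.range_mono hmn)
  le' n := Filtration.piFinset.le (Finset.range n)

lemma measurable_eval_pastFiltration {i n : ℕ} (hi : i < n) :
    Measurable[pastFiltration E n] fun x : ℕ → E => x i :=
  (measurable_pi_apply (⟨i, Finset.mem_range.2 hi⟩ : Finset.range n)).comp
    (comap_measurable (Finset.range n).restrict)

lemma indepFun_past_future (hindep : iIndepFun ξ P) (hξ : ∀ n, AEMeasurable (ξ n) P) (m : ℕ) :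
    IndepFun (fun ω (i : Finset.range m) => ξ i ω) (fun ω k => ξ (m + k) ω) P := by
  have := hindep.isProbabilityMeasure
  refine IndepFun.indepFun_process₀ (aemeasurable_pi_lambda _ fun i => hξ i)
    (fun k => hξ (m + k)) fun I => ?_
  have hdisj : Disjoint (Finset.range m) (I.map (addLeftEmbedding m)) := by
    simp only [Finset.disjoint_left, Finset.mem_range, Finset.mem_map, addLeftEmbedding_apply]
    omega
  exact (hindep.indepFun_finset₀ _ _ hdisj hξ).comp
    (ψ := fun y (k : I) => y ⟨m + k, Finset.mem_map_of_mem (addLeftEmbedding m) k.2⟩)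
    measurable_id (measurable_pi_lambda _ fun _ => measurable_pi_apply _)

lemma measure_shift_mem (hindep : iIndepFun ξ P) (hid : ∀ n, IdentDistrib (ξ n) (ξ 0) P P)
    {B : Set (ℕ → E)} (hB : MeasurableSet B) (m : ℕ) :
    P {ω | (fun k => ξ (m + k) ω) ∈ B} = P {ω | (fun k => ξ k ω) ∈ B} :=
  (IdentDistrib.pi (fun k => (hid (m + k)).trans (hid k).symm)
    (hindep.precomp (add_right_injective m)) hindep).measure_mem_eq hB

lemma measure_past_inter_future (hindep : iIndepFun ξ P)
    (hid : ∀ n, IdentDistrib (ξ n) (ξ 0) P P) {m : ℕ} {A B : Set (ℕ → E)}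
    (hA : MeasurableSet[pastFiltration E m] A) (hB : MeasurableSet B) :
    P {ω | (fun k => ξ k ω) ∈ A ∧ (fun k => ξ (m + k) ω) ∈ B} =
      P {ω | (fun k => ξ k ω) ∈ A} * P {ω | (fun k => ξ k ω) ∈ B} := by
  obtain ⟨A', hA', rfl⟩ := hA
  rw [← measure_shift_mem hindep hid hB m]
  exact (indepFun_past_future hindep (fun n => (hid n).aemeasurable_fst) m
    ).measure_inter_preimage_eq_mul A' B hA' hB

theorem strong_markov_iid (hindep : iIndepFun ξ P) (hid : ∀ n, IdentDistrib (ξ n) (ξ 0) P P)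
    {τ : (ℕ → E) → WithTop ℕ} (hτ : IsStoppingTime (pastFiltration E) τ)
    {B : Set (ℕ → E)} (hB : MeasurableSet B) :
    P {ω | ∃ m : ℕ, τ (fun k => ξ k ω) = m ∧ (fun k => ξ (m + k) ω) ∈ B} =
      P {ω | τ (fun k => ξ k ω) ≠ ⊤} * P {ω | (fun k => ξ k ω) ∈ B} := by
  have hX (m : ℕ) : AEMeasurable (fun ω k => ξ (m + k) ω) P :=
    aemeasurable_pi_lambda _ fun k => (hid (m + k)).aemeasurable_fst
  have hX₀ : AEMeasurable (fun ω k => ξ k ω) P := by simpa using hX 0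
  have hτm (m : ℕ) : NullMeasurableSet {ω | τ (fun k => ξ k ω) = m} P :=
    hX₀.nullMeasurable ((pastFiltration E).le m _ (hτ.measurableSet_eq m))
  have hdisj : Pairwise (Function.onFun Disjoint fun m : ℕ => {ω | τ (fun k => ξ k ω) = m}) :=
    fun a b hab => Set.disjoint_left.2 fun ω ha hb =>
      hab (WithTop.coe_injective (ha.symm.trans hb))
  calc P {ω | ∃ m : ℕ, τ (fun k => ξ k ω) = m ∧ (fun k => ξ (m + k) ω) ∈ B}
      = P (⋃ m : ℕ, {ω | τ (fun k => ξ k ω) = m ∧ (fun k => ξ (m + k) ω) ∈ B}) := by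
        congr 1; ext; simp
    _ = ∑' m : ℕ, P {ω | τ (fun k => ξ k ω) = m ∧ (fun k => ξ (m + k) ω) ∈ B} :=
        measure_iUnion₀
          (fun a b hab => ((hdisj hab).mono (fun _ h => h.1) fun _ h => h.1).aedisjoint)
          fun m => (hτm m).inter ((hX m).nullMeasurable hB)
    _ = ∑' m : ℕ, P {ω | τ (fun k => ξ k ω) = m} * P {ω | (fun k => ξ k ω) ∈ B} :=
        tsum_congr fun m => measure_past_inter_future hindep hid (hτ.measurableSet_eq m) hB
    _ = P (⋃ m : ℕ, {ω | τ (fun k => ξ k ω) = m}) * P {ω | (fun k => ξ k ω) ∈ B} := by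
        rw [ENNReal.tsum_mul_right, measure_iUnion₀ (fun a b hab => (hdisj hab).aedisjoint) hτm]
    _ = P {ω | τ (fun k => ξ k ω) ≠ ⊤} * P {ω | (fun k => ξ k ω) ∈ B} := by
        congr 2; ext
        exact mem_iUnion.trans
          (WithTop.ne_top_iff_exists.trans (exists_congr fun _ => eq_comm)).symm

end StrongMarkov

section ENatValued

lemma encard_setOf_natCast_lt (x : ℕ∞) : {j : ℕ | (j : ℕ∞) < x}.encard = x := by
  induction x using ENat.recTopCoe with
  | top => simp
  | coe n =>
    have : {j : ℕ | (j : ℕ∞) < n} = Finset.range n := by ext; simp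
    rw [this, Set.encard_coe_eq_coe_finsetCard, Finset.card_range]

lemma natCast_le_encard_iff_exists_le_count (p : ℕ → Prop) [DecidablePred p] (j : ℕ) :
    (j : ℕ∞) ≤ {i | p i}.encard ↔ ∃ n, j ≤ Nat.count p n := by
  constructor
  · intro hj
    obtain ⟨t, htp, htj⟩ := Set.exists_subset_encard_eq hj
    lift t to Finset ℕ using Set.finite_of_encard_eq_coe htj
    obtain ⟨n, hn⟩ := t.exists_nat_subset_range
    rw [Set.encard_coe_eq_coe_finsetCard, Nat.cast_inj] at htj
    refine ⟨n, ?_⟩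
    rw [Nat.count_eq_card_filter_range, ← htj]
    exact Finset.card_le_card fun i hi => Finset.mem_filter.2 ⟨hn hi, htp hi⟩
  · rintro ⟨n, hn⟩
    calc (j : ℕ∞) ≤ Nat.count p n := mod_cast hn
      _ = ((Finset.range n).filter p : Set ℕ).encard := by
        rw [Set.encard_coe_eq_coe_finsetCard, Nat.count_eq_card_filter_range]
      _ ≤ {i | p i}.encard := Set.encard_le_encard fun i hi => (Finset.mem_filter.1 hi).2

variable {Ω : Type*} [MeasurableSpace Ω] (P : Measure Ω) (N : Ω → ℕ∞)

lemma lintegral_enat_le_tsum_measure :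
    ∫⁻ ω, (N ω : ℝ≥0∞) ∂P ≤ ∑' j : ℕ, P {ω | (j : ℕ∞) < N ω} := by
  -- `N` need not be measurable, so its level sets are replaced by measurable hulls.
  let T (j : ℕ) : Set Ω := toMeasurable P {ω | (j : ℕ∞) < N ω}
  have hT (j : ℕ) : MeasurableSet (T j) := measurableSet_toMeasurable _ _
  calc ∫⁻ ω, (N ω : ℝ≥0∞) ∂P
      ≤ ∫⁻ ω, ∑' j, (T j).indicator 1 ω ∂P := by
        refine lintegral_mono fun ω => ?_
        calc (N ω : ℝ≥0∞) = ∑' j : ℕ, {j : ℕ | (j : ℕ∞) < N ω}.indicator 1 j := by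
              conv_lhs => rw [← encard_setOf_natCast_lt (N ω), ← ENNReal.tsum_set_one]
              exact tsum_subtype {j : ℕ | (j : ℕ∞) < N ω} (fun _ => (1 : ℝ≥0∞))
          _ ≤ ∑' j, (T j).indicator 1 ω := by
              gcongr with j
              exact Set.indicator_le_indicator_of_subset
                (subset_toMeasurable P {ω | (j : ℕ∞) < N ω}) (fun _ => zero_le_one) ω
    _ = ∑' j, P (T j) := by
        rw [lintegral_tsum fun j => (measurable_one.indicator (hT j)).aemeasurable]
        simp_rw [lintegral_indicator_one (hT _)]
    _ = ∑' j : ℕ, P {ω | (j : ℕ∞) < N ω} := by simp_rw [T, measure_toMeasurable]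

lemma ae_lt_top_of_tsum_measure_ne_top (hN : ∑' j : ℕ, P {ω | (j : ℕ∞) < N ω} ≠ ⊤) :
    ∀ᵐ ω ∂P, N ω < ⊤ := by
  filter_upwards [ae_eventually_notMem hN] with ω hω
  obtain ⟨j, hj⟩ := hω.exists
  exact (not_lt.1 hj).trans_lt (ENat.natCast_lt_top j)

end ENatValued

section Walk

lemma psum_succ (x : ℕ → ℝ) (n : ℕ) : psum x (n + 1) = psum x n + x n :=
  Finset.sum_range_succ _ _

lemma psum_shift (x : ℕ → ℝ) (m n : ℕ) :
    psum (fun k => x (m + k)) n = psum x (m + n) - psum x m :=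
  eq_sub_of_add_eq' (Finset.sum_range_add x m n).symm

/-- The event of probability `q`: the walk `S_n` with increments `x` is nonnegative at all times
`n ≥ 1`. -/
def nonnegWalk : Set (ℕ → ℝ) := {x | ∀ n : ℕ, 1 ≤ n → 0 ≤ psum x n}

lemma measurableSet_nonnegWalk : MeasurableSet nonnegWalk := by
  have : nonnegWalk = ⋂ n : ℕ, ⋂ _ : 1 ≤ n, {x | 0 ≤ psum x n} := by ext; simp [nonnegWalk]
  rw [this]
  refine .iInter fun n => .iInter fun _ => measurableSet_le measurable_const ?_
  exact Finset.measurable_sum _ fun i _ => measurable_pi_apply i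

lemma exists_shift_mem_nonnegWalk {x : ℕ → ℝ} (hx : Tendsto (psum x) atTop atTop) :
    ∃ m, (fun k => x (m + k)) ∈ nonnegWalk := by
  obtain ⟨m, hm⟩ := (Nat.cofinite_eq_atTop ▸ hx).exists_forall_le
  refine ⟨m, fun n _ => ?_⟩
  rw [psum_shift]
  exact sub_nonneg.2 (hm (m + n))

lemma tendsto_atTop_of_tendsto_div_natCast {u : ℕ → ℝ} {c : ℝ} (hc : 0 < c)
    (hu : Tendsto (fun n : ℕ => u n / n) atTop (nhds c)) : Tendsto u atTop atTop := by
  refine (hu.pos_mul_atTop hc tendsto_natCast_atTop_atTop).congr' ?_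
  filter_upwards [eventually_ne_atTop 0] with n hn
  exact div_mul_cancel₀ _ (Nat.cast_ne_zero.2 hn)

theorem measure_nonnegWalk_ne_zero {Ω : Type*} [MeasurableSpace Ω] {P : Measure Ω}
    {ξ : ℕ → Ω → ℝ} (hindep : iIndepFun ξ P) (hid : ∀ n, IdentDistrib (ξ n) (ξ 0) P P)
    (hint : Integrable (ξ 0) P) (hmean : 0 < ∫ ω, ξ 0 ω ∂P) :
    P {ω | (fun k => ξ k ω) ∈ nonnegWalk} ≠ 0 := by
  intro hzero
  have := hindep.isProbabilityMeasure
  have hnever : ∀ᵐ ω ∂P, ∀ m, (fun k => ξ (m + k) ω) ∉ nonnegWalk :=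
    ae_all_iff.2 fun m => measure_eq_zero_iff_ae_notMem.1
      ((measure_shift_mem hindep hid measurableSet_nonnegWalk m).trans hzero)
  have hsome : ∀ᵐ ω ∂P, ∃ m, (fun k => ξ (m + k) ω) ∈ nonnegWalk := by
    filter_upwards [strong_law_ae_real ξ hint (fun _ _ hij => hindep.indepFun hij) hid] with ω hω
    exact exists_shift_mem_nonnegWalk (tendsto_atTop_of_tendsto_div_natCast hmean hω)
  obtain ⟨ω, hn, m, hm⟩ := (hnever.and hsome).exists
  exact hn m hm

end Walk

section Downcrossings

variable (x : ℕ → ℝ) (μ h w : ℝ)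

/-- The times `n` at which a real sequence goes from a nonnegative value to a negative one. -/
def downcrossings (W : ℕ → ℝ) : Set ℕ := {n | 0 ≤ W n ∧ W (n + 1) < 0}

open scoped Classical in
/-- The number of downcrossings at times strictly before `n`. -/
noncomputable def downcrossCount (W : ℕ → ℝ) (n : ℕ) : ℕ := Nat.count (· ∈ downcrossings W) n

open scoped Classical in
lemma downcrossCount_succ (W : ℕ → ℝ) (n : ℕ) :
    downcrossCount W (n + 1) =
      downcrossCount W n + if n ∈ downcrossings W then 1 else 0 :=
  Nat.count_succ _ n

lemma downcrossCount_mono (W : ℕ → ℝ) : Monotone (downcrossCount W) := by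
  classical exact Nat.count_monotone _

lemma natCast_le_encard_downcrossings_iff (W : ℕ → ℝ) (j : ℕ) :
    (j : ℕ∞) ≤ (downcrossings W).encard ↔ ∃ n, j ≤ downcrossCount W n := by
  classical exact natCast_le_encard_iff_exists_le_count (· ∈ downcrossings W) j

lemma exists_nonneg_downcrossCount_eq {W : ℕ → ℝ} {j n : ℕ} (hn : j < downcrossCount W n) :
    ∃ m, 0 ≤ W m ∧ downcrossCount W m = j := by
  classical
  have hj (hfin : (downcrossings W).Finite) : j < hfin.toFinset.card :=
    hn.trans_le (Nat.count_le_card (p := (· ∈ downcrossings W)) hfin n)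
  exact ⟨Nat.nth (· ∈ downcrossings W) j, (Nat.nth_mem j hj).1, Nat.count_nth hj⟩

lemma numCycles_le_one_add_encard_downcrossings (A : ℝ) :
    numCycles x μ h w A ≤ 1 + (downcrossings (deCusum x μ h w)).encard := by
  unfold numCycles
  gcongr
  exact fun n hn => hn.2

lemma deCusum_succ (n : ℕ) :
    deCusum x μ h w (n + 1) =
      if deCusum x μ h w n < 0 then min (deCusum x μ h w n + μ) 0
      else max (deCusum x μ h w n + x n) (-h) := rfl

variable {x μ h w}

lemma psum_shift_le_deCusum {m : ℕ} (hm : 0 ≤ deCusum x μ h w m)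
    (hx : (fun k => x (m + k)) ∈ nonnegWalk) (n : ℕ) :
    psum (fun k => x (m + k)) n ≤ deCusum x μ h w (m + n) := by
  induction n with
  | zero => simpa [psum] using hm
  | succ n ih =>
    have hn : 0 ≤ deCusum x μ h w (m + n) := by
      rcases Nat.eq_zero_or_pos n with rfl | hpos
      · exact hm
      · exact (hx n hpos).trans ih
    rw [← add_assoc, deCusum_succ, if_neg hn.not_gt, psum_succ]
    exact le_max_of_le_left (by gcongr)

lemma downcrossCount_deCusum_le_of_shift_mem_nonnegWalk {m : ℕ} (hm : 0 ≤ deCusum x μ h w m)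
    (hx : (fun k => x (m + k)) ∈ nonnegWalk) (n : ℕ) :
    downcrossCount (deCusum x μ h w) n ≤ downcrossCount (deCusum x μ h w) m := by
  refine (downcrossCount_mono _ (Nat.le_add_left n m)).trans ?_
  induction n with
  | zero => rfl
  | succ n ih =>
    have hnonneg : 0 ≤ deCusum x μ h w (m + n + 1) :=
      (hx (n + 1) n.succ_pos).trans (psum_shift_le_deCusum hm hx (n + 1))
    rwa [← add_assoc, downcrossCount_succ, if_neg fun hd => hd.2.not_ge hnonneg, add_zero]

end Downcrossings

section CycleStart

variable (μ h w : ℝ)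

lemma adapted_deCusum :
    Adapted (pastFiltration ℝ) fun n x => deCusum x μ h w n := by
  intro n
  induction n with
  | zero => exact measurable_const
  | succ n ih =>
    have hW : Measurable[pastFiltration ℝ (n + 1)] fun x => deCusum x μ h w n :=
      ih.mono ((pastFiltration ℝ).mono n.le_succ) le_rfl
    have hx : Measurable[pastFiltration ℝ (n + 1)] fun x : ℕ → ℝ => x n :=
      measurable_eval_pastFiltration n.lt_succ_self
    exact Measurable.ite (measurableSet_lt hW measurable_const)
      ((hW.add_const μ).min measurable_const) ((hW.add hx).max measurable_const)

lemma adapted_downcrossCount_deCusum :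
    Adapted (pastFiltration ℝ) fun n x => downcrossCount (deCusum x μ h w) n := by
  classical
  intro n
  induction n with
  | zero => exact measurable_const
  | succ n ih =>
    have hle := (pastFiltration ℝ).mono n.le_succ
    have hdown : MeasurableSet[pastFiltration ℝ (n + 1)]
        {x | n ∈ downcrossings (deCusum x μ h w)} :=
      (measurableSet_le measurable_const ((adapted_deCusum μ h w n).mono hle le_rfl)).inter
        (measurableSet_lt (adapted_deCusum μ h w (n + 1)) measurable_const)
    simp only [downcrossCount_succ]
    exact (ih.mono hle le_rfl).add (Measurable.ite hdown measurable_const measurable_const)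

/-- The first time at which the statistic is nonnegative after exactly `j` downcrossings, as a
function of the increments: the start of the active phase of the `(j + 1)`-st cycle. -/
noncomputable def cycleStart (j : ℕ) : (ℕ → ℝ) → WithTop ℕ :=
  hittingAfter (fun n x => (deCusum x μ h w n, downcrossCount (deCusum x μ h w) n))
    (Set.Ici 0 ×ˢ {j}) 0

lemma isStoppingTime_cycleStart (j : ℕ) :
    IsStoppingTime (pastFiltration ℝ) (cycleStart μ h w j) :=
  Adapted.isStoppingTime_hittingAfter
    (fun n => (adapted_deCusum μ h w n).prodMk (adapted_downcrossCount_deCusum μ h w n))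
    (measurableSet_Ici.prod (measurableSet_singleton j))

variable {μ h w} {x : ℕ → ℝ} {j : ℕ}

lemma cycleStart_ne_top_iff :
    cycleStart μ h w j x ≠ ⊤ ↔
      ∃ m, 0 ≤ deCusum x μ h w m ∧ downcrossCount (deCusum x μ h w) m = j := by
  simp [cycleStart, hittingAfter_eq_top_iff]

lemma nonneg_and_downcrossCount_eq_of_cycleStart_eq {m : ℕ} (hm : cycleStart μ h w j x = m) :
    0 ≤ deCusum x μ h w m ∧ downcrossCount (deCusum x μ h w) m = j := by
  have hmem := hittingAfter_mem_set_of_ne_top (hm.trans_ne WithTop.coe_ne_top)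
  rw [← cycleStart, hm] at hmem
  exact hmem

lemma exists_cycleStart_eq_and_shift_notMem_nonnegWalk
    (hj : ((j + 1 : ℕ) : ℕ∞) ≤ (downcrossings (deCusum x μ h w)).encard) :
    ∃ m : ℕ, cycleStart μ h w j x = m ∧ (fun k => x (m + k)) ∉ nonnegWalk := by
  obtain ⟨n, hn⟩ := (natCast_le_encard_downcrossings_iff _ _).1 hj
  obtain ⟨m, hm⟩ := WithTop.ne_top_iff_exists.1
    (cycleStart_ne_top_iff.2 (exists_nonneg_downcrossCount_eq hn))
  obtain ⟨hnonneg, hcount⟩ := nonneg_and_downcrossCount_eq_of_cycleStart_eq hm.symm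
  refine ⟨m, hm.symm, fun hx => (Nat.lt_of_succ_le hn).not_ge ?_⟩
  exact (downcrossCount_deCusum_le_of_shift_mem_nonnegWalk hnonneg hx n).trans hcount.le

lemma natCast_le_encard_downcrossings_of_cycleStart_ne_top (hj : cycleStart μ h w j x ≠ ⊤) :
    (j : ℕ∞) ≤ (downcrossings (deCusum x μ h w)).encard := by
  obtain ⟨m, -, hm⟩ := cycleStart_ne_top_iff.1 hj
  exact (natCast_le_encard_downcrossings_iff _ _).2 ⟨m, hm.ge⟩

end CycleStart

section Tail

variable {Ω : Type*} [MeasurableSpace Ω] {P : Measure Ω} {ξ : ℕ → Ω → ℝ}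

theorem measure_natCast_le_encard_downcrossings_le (hindep : iIndepFun ξ P)
    (hid : ∀ n, IdentDistrib (ξ n) (ξ 0) P P) (μ h w : ℝ) (j : ℕ) :
    P {ω | (j : ℕ∞) ≤ (downcrossings (deCusum (fun k => ξ k ω) μ h w)).encard} ≤
      (1 - P {ω | (fun k => ξ k ω) ∈ nonnegWalk}) ^ j := by
  have := hindep.isProbabilityMeasure
  have hX : AEMeasurable (fun ω k => ξ k ω) P :=
    aemeasurable_pi_lambda _ fun k => (hid k).aemeasurable_fst
  induction j with
  | zero => simp
  | succ j ih =>
    calc P {ω | ((j + 1 : ℕ) : ℕ∞) ≤ (downcrossings (deCusum (fun k => ξ k ω) μ h w)).encard}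
        ≤ P {ω | ∃ m : ℕ, cycleStart μ h w j (fun k => ξ k ω) = m ∧
            (fun k => ξ (m + k) ω) ∈ nonnegWalkᶜ} :=
          measure_mono fun _ => exists_cycleStart_eq_and_shift_notMem_nonnegWalk
      _ = P {ω | cycleStart μ h w j (fun k => ξ k ω) ≠ ⊤} *
            P {ω | (fun k => ξ k ω) ∈ nonnegWalkᶜ} :=
          strong_markov_iid hindep hid (isStoppingTime_cycleStart μ h w j)
            measurableSet_nonnegWalk.compl
      _ = P {ω | cycleStart μ h w j (fun k => ξ k ω) ≠ ⊤} *
            (1 - P {ω | (fun k => ξ k ω) ∈ nonnegWalk}) := by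
          congr 1
          exact prob_compl_eq_one_sub₀ (hX.nullMeasurable measurableSet_nonnegWalk)
      _ ≤ P {ω | (j : ℕ∞) ≤ (downcrossings (deCusum (fun k => ξ k ω) μ h w)).encard} *
            (1 - P {ω | (fun k => ξ k ω) ∈ nonnegWalk}) := by
          gcongr
          exact natCast_le_encard_downcrossings_of_cycleStart_ne_top
      _ ≤ (1 - P {ω | (fun k => ξ k ω) ∈ nonnegWalk}) ^ (j + 1) := by
          rw [pow_succ]; gcongr

lemma measure_natCast_lt_numCycles_le (hindep : iIndepFun ξ P)
    (hid : ∀ n, IdentDistrib (ξ n) (ξ 0) P P) (μ h w A : ℝ) (j : ℕ) :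
    P {ω | (j : ℕ∞) < numCycles (fun k => ξ k ω) μ h w A} ≤
      (1 - P {ω | (fun k => ξ k ω) ∈ nonnegWalk}) ^ j := by
  refine (measure_mono fun ω hω => ?_).trans
    (measure_natCast_le_encard_downcrossings_le hindep hid μ h w j)
  have hlt := hω.trans_le (numCycles_le_one_add_encard_downcrossings (fun k => ξ k ω) μ h w A)
  rw [add_comm] at hlt
  exact (ENat.lt_add_one_iff' (ENat.natCast_ne_top j)).1 hlt

end Tail

lemma tsum_one_sub_pow {q : ℝ≥0∞} (hq : q ≤ 1) : ∑' j : ℕ, (1 - q) ^ j = q⁻¹ := by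
  rw [ENNReal.tsum_geometric, ENNReal.sub_sub_cancel ENNReal.one_ne_top hq]

theorem numCycles_bound_general {Ω : Type*} [MeasurableSpace Ω] (P : Measure Ω)
    (ξ : ℕ → Ω → ℝ) (hindep : iIndepFun ξ P) (hid : ∀ n, IdentDistrib (ξ n) (ξ 0) P P)
    (hint : Integrable (ξ 0) P) (hmean : 0 < ∫ ω, ξ 0 ω ∂P) (μ h w A : ℝ)
    (q : ℝ≥0∞) (hq : q = P {ω | ∀ n : ℕ, 1 ≤ n → 0 ≤ psum (fun k => ξ k ω) n}) :
    (∀ k : ℕ, 1 ≤ k →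
      P {ω | (k : ℕ∞) ≤ numCycles (fun j => ξ j ω) μ h w A} ≤ (1 - q) ^ (k - 1)) ∧
    ∫⁻ ω, (numCycles (fun j => ξ j ω) μ h w A : ℝ≥0∞) ∂P ≤ q⁻¹ ∧
    q⁻¹ < ⊤ ∧
    ∀ᵐ ω ∂P, numCycles (fun j => ξ j ω) μ h w A < ⊤ := by
  have := hindep.isProbabilityMeasure
  have htail (j : ℕ) : P {ω | (j : ℕ∞) < numCycles (fun k => ξ k ω) μ h w A} ≤ (1 - q) ^ j :=
    hq ▸ measure_natCast_lt_numCycles_le hindep hid μ h w A j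
  have hsum : ∑' j : ℕ, P {ω | (j : ℕ∞) < numCycles (fun k => ξ k ω) μ h w A} ≤ q⁻¹ :=
    (ENNReal.tsum_le_tsum htail).trans_eq (tsum_one_sub_pow (hq ▸ prob_le_one))
  have hfin : q⁻¹ < ⊤ :=
    ENNReal.inv_lt_top.2 (pos_iff_ne_zero.2 (hq ▸ measure_nonnegWalk_ne_zero hindep hid hint hmean))
  refine ⟨fun k hk => (measure_mono fun ω hω => ?_).trans (htail (k - 1)),
    (lintegral_enat_le_tsum_measure P _).trans hsum, hfin,
    ae_lt_top_of_tsum_measure_ne_top P _ (hsum.trans_lt hfin).ne⟩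
  exact (Nat.cast_lt.2 (Nat.sub_one_lt_of_lt hk)).trans_le (mem_ofPred_eq ▸ hω)

/-- For i.i.d. integrable increments with positive mean, with
`q = ℙ(S_n ≥ 0 for all n ≥ 1)`, the number of cycles `N` of the DE-CuSum statistic started at
`w ∈ [-h,∞)` before crossing `A ≥ 0` satisfies `ℙ(N ≥ k) ≤ (1-q)^(k-1)` for all `k ≥ 1`,
hence `E[N] ≤ 1/q < ∞`; in particular `N < ∞` almost surely. The bound `1/q` does not depend
on `w` or on the threshold `A`. -/
theorem numCycles_bound {Ω : Type*} [MeasurableSpace Ω] (P : Measure Ω)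
    [IsProbabilityMeasure P] (ξ : ℕ → Ω → ℝ) (hmeas : ∀ n, Measurable (ξ n))
    (hindep : iIndepFun ξ P)
    (hid : ∀ n, IdentDistrib (ξ n) (ξ 0) P P)
    (hint : Integrable (ξ 0) P) (hmean : 0 < ∫ ω, ξ 0 ω ∂P)
    (μ h w A : ℝ) (hμ : 0 < μ) (hh : 0 ≤ h) (hw : -h ≤ w) (hA : 0 ≤ A)
    (q : ℝ≥0∞) (hq : q = P {ω | ∀ n : ℕ, 1 ≤ n → 0 ≤ psum (fun k => ξ k ω) n}) :
    (∀ k : ℕ, 1 ≤ k →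
      P {ω | (k : ℕ∞) ≤ numCycles (fun j => ξ j ω) μ h w A} ≤ (1 - q) ^ (k - 1)) ∧
    ∫⁻ ω, (numCycles (fun j => ξ j ω) μ h w A : ℝ≥0∞) ∂P ≤ q⁻¹ ∧
    q⁻¹ < ⊤ ∧
    ∀ᵐ ω ∂P, numCycles (fun j => ξ j ω) μ h w A < ⊤ := by
  exact numCycles_bound_general P ξ hindep hid hint hmean μ h w A q hq
end
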